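/- Suppose that for every j ∈ {1,…,M} we have 2|(Z_n)_j| ≤ ŵ_j, and let β̂ be a minimizer over a convex set B ⊆ ℝ^M of the penalized criterion b ↦ R_n(b) + 2 pen(b). Let β ∈ B with J = J(β), and suppose ⟨h_{β̂} − h_0, h_{β̂} − h_β⟩_n ≥ 0. Then β̂ − β satisfies the cone constraint |β̂_{J^∁}|_{1,ŵ} ≤ 3 |β̂_J − β_J|_{1,ŵ}. -/

import Mathlib

/-!
Write `Δ = β̂ - β`. The risk is a quadratic `R(b) = ⟨h_b, h_b⟩ₙ - 2 L(b)`, where `L` is the linear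
functional `b ↦ (1/n) ∑ᵢ ∫ (h_b(Xᵢ) - h̄_b) dNⁱ`. Since the centred functions satisfy
`∑ᵢ (h(Xᵢ) - h̄_Y(t)) Yⁱ_t = 0` (`sum_cent_mul_Y`), the baseline `λ₀` and the mean of `h₀` drop out
of the noise, so that `Z_j = L_j - ⟨h_j, h₀⟩ₙ` (`noiseZ_eq`).

Comparing `β̂` with `β̂ - sΔ ∈ B` for `s ∈ (0, 1]`, using convexity of the penalty, dividing by `s` and
letting `s → 0` gives the variational inequality
`⟨h_β̂ - h₀, h_Δ⟩ₙ + pen β̂ - pen β ≤ ∑ⱼ Δⱼ Zⱼ ≤ pen Δ / 2`.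
The inner product is nonnegative, so `pen β̂ - pen β ≤ pen Δ / 2`; splitting the sums over the support
of `β` and its complement yields the cone constraint (`cone_of_pen_le`).
-/

open MeasureTheory Finset

/-- Empirical mean of `h` over the at-risk individuals at time `t`:
`h̄_Y(t) = (∑ᵢ h(Xᵢ) Yᵢ(t)) / (∑ᵢ Yᵢ(t))`. -/
noncomputable def hbar {n d : ℕ} (X : Fin n → (Fin d → ℝ)) (Y : Fin n → ℝ → ℝ)
    (h : (Fin d → ℝ) → ℝ) (t : ℝ) : ℝ :=
  (∑ i, h (X i) * Y i t) / (∑ i, Y i t)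

/-- Empirical inner product `⟨g, h⟩ₙ`. -/
noncomputable def empInner {n d : ℕ} (X : Fin n → (Fin d → ℝ)) (Y : Fin n → ℝ → ℝ)
    (g h : (Fin d → ℝ) → ℝ) : ℝ :=
  (1 / (n : ℝ)) * ∑ i, ∫ t in (0:ℝ)..1,
    (g (X i) - hbar X Y g t) * (h (X i) - hbar X Y h t) * Y i t

/-- Empirical squared norm `‖h‖ₙ²`. -/
noncomputable def empNormSq {n d : ℕ} (X : Fin n → (Fin d → ℝ)) (Y : Fin n → ℝ → ℝ)
    (h : (Fin d → ℝ) → ℝ) : ℝ := empInner X Y h h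

/-- The linear combination `h_β = ∑ⱼ βⱼ hⱼ` over the dictionary. -/
noncomputable def hlin {M d : ℕ} (hdic : Fin M → (Fin d → ℝ) → ℝ) (β : Fin M → ℝ) :
    (Fin d → ℝ) → ℝ := fun x => ∑ j, β j * hdic j x

/-- The least-squares risk `Rₙ(β)`. -/
noncomputable def riskRn {n M d : ℕ} (X : Fin n → (Fin d → ℝ)) (Y : Fin n → ℝ → ℝ)
    (N : Fin n → Measure ℝ) (hdic : Fin M → (Fin d → ℝ) → ℝ) (β : Fin M → ℝ) : ℝ :=
  (1 / (n : ℝ)) * ∑ i, ∫ t in (0:ℝ)..1,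
      (hlin hdic β (X i) - ∑ j, β j * hbar X Y (hdic j) t) ^ 2 * Y i t
  - (2 / (n : ℝ)) * ∑ i, ∫ t in Set.Icc (0:ℝ) 1,
      (hlin hdic β (X i) - ∑ j, β j * hbar X Y (hdic j) t) ∂(N i)

/-- The noise vector `(Zₙ)ⱼ`. -/
noncomputable def noiseZ {n M d : ℕ} (X : Fin n → (Fin d → ℝ)) (Y : Fin n → ℝ → ℝ)
    (N : Fin n → Measure ℝ) (hdic : Fin M → (Fin d → ℝ) → ℝ)
    (lam0 : ℝ → ℝ) (h0 : (Fin d → ℝ) → ℝ) (j : Fin M) : ℝ :=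
  (1 / (n : ℝ)) * ∑ i,
    ((∫ t in Set.Icc (0:ℝ) 1, (hdic j (X i) - hbar X Y (hdic j) t) ∂(N i)) -
      ∫ t in (0:ℝ)..1, (hdic j (X i) - hbar X Y (hdic j) t) * (lam0 t + h0 (X i)) * Y i t)

/-- Weighted ℓ¹-penalty `pen(b) = ∑ⱼ ŵⱼ |bⱼ|`. -/
noncomputable def penW {M : ℕ} (w b : Fin M → ℝ) : ℝ := ∑ j, w j * |b j|

/-- Support of a vector, `J(β) = {j : βⱼ ≠ 0}`. -/
noncomputable def suppJ {M : ℕ} (β : Fin M → ℝ) : Finset (Fin M) :=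
  Finset.univ.filter (fun j => β j ≠ 0)

/-- Restriction of a vector to a set of coordinates: `(b_J)ⱼ = bⱼ` if `j ∈ J`, else `0`. -/
noncomputable def restr {M : ℕ} (J : Finset (Fin M)) (b : Fin M → ℝ) : Fin M → ℝ :=
  fun j => if j ∈ J then b j else 0

/-- The centred value `h(Xᵢ) - h̄_Y(t)`. -/
noncomputable def cent {n d : ℕ} (X : Fin n → (Fin d → ℝ)) (Y : Fin n → ℝ → ℝ)
    (h : (Fin d → ℝ) → ℝ) (i : Fin n) (t : ℝ) : ℝ :=
  h (X i) - hbar X Y h t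

/-- The linear functional `h ↦ (1/n) ∑ᵢ ∫ (h(Xᵢ) - h̄_Y(t)) dNⁱ(t)`. -/
noncomputable def empLin {n d : ℕ} (X : Fin n → (Fin d → ℝ)) (Y : Fin n → ℝ → ℝ)
    (N : Fin n → Measure ℝ) (h : (Fin d → ℝ) → ℝ) : ℝ :=
  (1 / (n : ℝ)) * ∑ i, ∫ t in Set.Icc (0:ℝ) 1, cent X Y h i t ∂(N i)

section Centring

variable {n M d : ℕ} (X : Fin n → (Fin d → ℝ)) (Y : Fin n → ℝ → ℝ)

lemma hbar_hlin (hdic : Fin M → (Fin d → ℝ) → ℝ) (b : Fin M → ℝ) (t : ℝ) :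
    hbar X Y (hlin hdic b) t = ∑ j, b j * hbar X Y (hdic j) t := by
  simp only [hbar, hlin, Finset.sum_mul, mul_div_assoc', Finset.mul_sum]
  rw [Finset.sum_comm, Finset.sum_div]
  simp only [mul_assoc]

lemma cent_hlin (hdic : Fin M → (Fin d → ℝ) → ℝ) (b : Fin M → ℝ) (i : Fin n) (t : ℝ) :
    cent X Y (hlin hdic b) i t = ∑ j, b j * cent X Y (hdic j) i t := by
  simp only [cent, hbar_hlin, mul_sub, Finset.sum_sub_distrib]
  rfl

lemma cent_comb (a c : ℝ) (g h : (Fin d → ℝ) → ℝ) (i : Fin n) (t : ℝ) :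
    cent X Y (fun x => a * g x + c * h x) i t = a * cent X Y g i t + c * cent X Y h i t := by
  have : hbar X Y (fun x => a * g x + c * h x) t = a * hbar X Y g t + c * hbar X Y h t := by
    simp only [hbar, add_mul, Finset.sum_add_distrib, mul_assoc, ← Finset.mul_sum]
    ring
  simp only [cent, this]
  ring

lemma sum_cent_mul_Y (h : (Fin d → ℝ) → ℝ) {t : ℝ} (ht : 0 < ∑ i, Y i t) :
    ∑ i, cent X Y h i t * Y i t = 0 := by
  simp only [cent, sub_mul, Finset.sum_sub_distrib, ← Finset.mul_sum]
  rw [hbar, div_mul_cancel₀ _ ht.ne', sub_self]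

variable {Y}

lemma measurable_cent (hY : ∀ i, Measurable (Y i)) (h : (Fin d → ℝ) → ℝ) (i : Fin n) :
    Measurable (cent X Y h i) := by
  unfold cent hbar
  fun_prop

/-- Centred functions are bounded at every time: where all the `Yⁱ_t` vanish, division by zero makes
the empirical mean `0`. -/
lemma abs_cent_le (hY : ∀ i t, Y i t ∈ Set.Icc (0:ℝ) 1) (h : (Fin d → ℝ) → ℝ) (i : Fin n) (t : ℝ) :
    |cent X Y h i t| ≤ |h (X i)| + ∑ k, |h (X k)| := by
  have hS : 0 ≤ ∑ k, Y k t := Finset.sum_nonneg fun k _ => (hY k t).1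
  have hb : |hbar X Y h t| ≤ ∑ k, |h (X k)| := by
    rw [hbar, abs_div, abs_of_nonneg hS]
    refine div_le_of_le_mul₀ hS (Finset.sum_nonneg fun k _ => abs_nonneg _) ?_
    rw [Finset.sum_mul]
    refine (Finset.abs_sum_le_sum_abs _ _).trans (Finset.sum_le_sum fun k _ => ?_)
    rw [abs_mul, abs_of_nonneg (hY k t).1]
    exact mul_le_mul_of_nonneg_left
      (Finset.single_le_sum (f := fun k => Y k t) (fun k _ => (hY k t).1) (Finset.mem_univ k))
      (abs_nonneg _)
  exact (abs_sub _ _).trans (by gcongr)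

lemma integrable_cent (hYm : ∀ i, Measurable (Y i)) (hY : ∀ i t, Y i t ∈ Set.Icc (0:ℝ) 1)
    (μ : Measure ℝ) [IsFiniteMeasure μ] (h : (Fin d → ℝ) → ℝ) (i : Fin n) :
    Integrable (cent X Y h i) μ :=
  Integrable.of_bound (measurable_cent X hYm h i).aestronglyMeasurable _
    (Filter.Eventually.of_forall fun t => abs_cent_le X hY h i t)

lemma intervalIntegrable_mul_cent (hYm : ∀ i, Measurable (Y i))
    (hY : ∀ i t, Y i t ∈ Set.Icc (0:ℝ) 1) {f : ℝ → ℝ} (hf : IntervalIntegrable f volume 0 1)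
    (h : (Fin d → ℝ) → ℝ) (i : Fin n) :
    IntervalIntegrable (fun t => cent X Y h i t * f t * Y i t) volume 0 1 := by
  have h1 := hf.1.bdd_mul (c := |h (X i)| + ∑ k, |h (X k)|)
    (measurable_cent X hYm h i).aestronglyMeasurable
    (Filter.Eventually.of_forall fun t => abs_cent_le X hY h i t)
  have h2 := h1.mul_bdd (c := 1) (hYm i).aestronglyMeasurable
    (Filter.Eventually.of_forall fun t => by
      rw [Real.norm_eq_abs, abs_of_nonneg (hY i t).1]; exact (hY i t).2)
  exact (intervalIntegrable_iff_integrableOn_Ioc_of_le zero_le_one).2 h2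

lemma intervalIntegrable_cent_cent (hYm : ∀ i, Measurable (Y i))
    (hY : ∀ i t, Y i t ∈ Set.Icc (0:ℝ) 1) (g h : (Fin d → ℝ) → ℝ) (i : Fin n) :
    IntervalIntegrable (fun t => cent X Y g i t * cent X Y h i t * Y i t) volume 0 1 :=
  intervalIntegrable_mul_cent X hYm hY
    ((intervalIntegrable_iff_integrableOn_Ioc_of_le zero_le_one).2
      (integrable_cent X hYm hY _ h i)) g i

lemma empInner_eq (g h : (Fin d → ℝ) → ℝ) : empInner X Y g h =
    (1 / (n : ℝ)) * ∑ i, ∫ t in (0:ℝ)..1, cent X Y g i t * cent X Y h i t * Y i t := rfl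

lemma empInner_comm (g h : (Fin d → ℝ) → ℝ) : empInner X Y g h = empInner X Y h g := by
  simp only [empInner_eq, mul_comm (cent X Y g _ _)]

lemma empInner_comb (hYm : ∀ i, Measurable (Y i)) (hY : ∀ i t, Y i t ∈ Set.Icc (0:ℝ) 1)
    (a c : ℝ) (g h k : (Fin d → ℝ) → ℝ) :
    empInner X Y (fun x => a * g x + c * h x) k = a * empInner X Y g k + c * empInner X Y h k := by
  have key : ∀ i, ∫ t in (0:ℝ)..1,
      cent X Y (fun x => a * g x + c * h x) i t * cent X Y k i t * Y i t =
      a * (∫ t in (0:ℝ)..1, cent X Y g i t * cent X Y k i t * Y i t) +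
      c * ∫ t in (0:ℝ)..1, cent X Y h i t * cent X Y k i t * Y i t := by
    intro i
    rw [← intervalIntegral.integral_const_mul, ← intervalIntegral.integral_const_mul,
      ← intervalIntegral.integral_add
        ((intervalIntegrable_cent_cent X hYm hY g k i).const_mul a)
        ((intervalIntegrable_cent_cent X hYm hY h k i).const_mul c)]
    congr 1
    funext t
    rw [cent_comb]
    ring
  simp only [empInner_eq, key, Finset.sum_add_distrib, ← Finset.mul_sum]
  ring

lemma empInner_hlin (hYm : ∀ i, Measurable (Y i)) (hY : ∀ i t, Y i t ∈ Set.Icc (0:ℝ) 1)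
    (hdic : Fin M → (Fin d → ℝ) → ℝ) (b : Fin M → ℝ) (k : (Fin d → ℝ) → ℝ) :
    empInner X Y (hlin hdic b) k = ∑ j, b j * empInner X Y (hdic j) k := by
  have key : ∀ i, ∫ t in (0:ℝ)..1,
      cent X Y (hlin hdic b) i t * cent X Y k i t * Y i t =
      ∑ j, b j * ∫ t in (0:ℝ)..1, cent X Y (hdic j) i t * cent X Y k i t * Y i t := by
    intro i
    simp only [← intervalIntegral.integral_const_mul]
    rw [← intervalIntegral.integral_finsetSum fun j _ =>
      (intervalIntegrable_cent_cent X hYm hY (hdic j) k i).const_mul (b j)]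
    congr 1
    funext t
    rw [cent_hlin, Finset.sum_mul, Finset.sum_mul]
    exact Finset.sum_congr rfl fun j _ => by ring
  simp only [empInner_eq, key]
  rw [Finset.sum_comm, Finset.mul_sum]
  refine Finset.sum_congr rfl fun j _ => ?_
  rw [← Finset.mul_sum]
  ring

lemma empLin_hlin (hYm : ∀ i, Measurable (Y i)) (hY : ∀ i t, Y i t ∈ Set.Icc (0:ℝ) 1)
    (N : Fin n → Measure ℝ) (hN : ∀ i, IsFiniteMeasure (N i))
    (hdic : Fin M → (Fin d → ℝ) → ℝ) (b : Fin M → ℝ) :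
    empLin X Y N (hlin hdic b) = ∑ j, b j * empLin X Y N (hdic j) := by
  have key : ∀ i, ∫ t in Set.Icc (0:ℝ) 1, cent X Y (hlin hdic b) i t ∂(N i) =
      ∑ j, b j * ∫ t in Set.Icc (0:ℝ) 1, cent X Y (hdic j) i t ∂(N i) := by
    intro i
    simp only [← integral_const_mul]
    rw [← integral_finsetSum _ fun j _ => (integrable_cent X hYm hY _ (hdic j) i).const_mul (b j)]
    simp only [cent_hlin]
  simp only [empLin, key]
  rw [Finset.sum_comm, Finset.mul_sum]
  refine Finset.sum_congr rfl fun j _ => ?_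
  rw [← Finset.mul_sum]
  ring

/-- In `riskRn` the `dN`-term, a constant in `i` and `t`, stands inside the average over `i` and the
integral over `[0, 1]`; both have total mass one (this needs `n ≠ 0`), so it can be pulled out. -/
lemma riskRn_eq (hn : 1 ≤ n) (hYm : ∀ i, Measurable (Y i))
    (hY : ∀ i t, Y i t ∈ Set.Icc (0:ℝ) 1)
    (N : Fin n → Measure ℝ) (hdic : Fin M → (Fin d → ℝ) → ℝ) (b : Fin M → ℝ) :
    riskRn X Y N hdic b =
      empInner X Y (hlin hdic b) (hlin hdic b) - 2 * empLin X Y N (hlin hdic b) := by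
  have hn0 : (n : ℝ) ≠ 0 := by positivity
  have h1 : riskRn X Y N hdic b = (1 / (n : ℝ)) * ∑ i, ∫ t in (0:ℝ)..1,
      (cent X Y (hlin hdic b) i t * cent X Y (hlin hdic b) i t * Y i t
        - 2 * empLin X Y N (hlin hdic b)) := by
    have h2 : 2 * empLin X Y N (hlin hdic b) = (2 / (n : ℝ)) * ∑ i, ∫ t in Set.Icc (0:ℝ) 1,
        cent X Y (hlin hdic b) i t ∂(N i) := by
      rw [empLin]
      ring
    rw [h2]
    simp only [riskRn, cent, hbar_hlin, pow_two]
  have h3 : ∀ i, ∫ t in (0:ℝ)..1,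
      (cent X Y (hlin hdic b) i t * cent X Y (hlin hdic b) i t * Y i t
        - 2 * empLin X Y N (hlin hdic b)) =
      (∫ t in (0:ℝ)..1, cent X Y (hlin hdic b) i t * cent X Y (hlin hdic b) i t * Y i t)
        - 2 * empLin X Y N (hlin hdic b) := by
    intro i
    rw [intervalIntegral.integral_sub (intervalIntegrable_cent_cent X hYm hY _ _ i)
      intervalIntegrable_const, intervalIntegral.integral_const]
    simp
  rw [h1, empInner_eq]
  simp only [h3, Finset.sum_sub_distrib, Finset.sum_const, Finset.card_univ, Fintype.card_fin,
    nsmul_eq_mul]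
  field_simp

/-- The baseline `λ₀` and the empirical mean of `h₀` do not depend on the individual, so they are
annihilated by the centring. -/
lemma compensator_eq (hYm : ∀ i, Measurable (Y i)) (hY : ∀ i t, Y i t ∈ Set.Icc (0:ℝ) 1)
    (hYpos : ∀ t ∈ Set.Icc (0:ℝ) 1, 0 < ∑ i, Y i t)
    {lam0 : ℝ → ℝ} (hlam : IntervalIntegrable lam0 volume 0 1) (h h0 : (Fin d → ℝ) → ℝ) :
    ∑ i, ∫ t in (0:ℝ)..1, cent X Y h i t * (lam0 t + h0 (X i)) * Y i t =
      ∑ i, ∫ t in (0:ℝ)..1, cent X Y h i t * cent X Y h0 i t * Y i t := by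
  have hI : ∀ i, IntervalIntegrable
      (fun t => cent X Y h i t * (lam0 t + h0 (X i)) * Y i t) volume 0 1 := fun i =>
    intervalIntegrable_mul_cent X hYm hY (hlam.add intervalIntegrable_const) h i
  rw [← intervalIntegral.integral_finsetSum fun i _ => hI i,
    ← intervalIntegral.integral_finsetSum fun i _ =>
      intervalIntegrable_cent_cent X hYm hY h h0 i]
  refine intervalIntegral.integral_congr fun t ht => ?_
  rw [Set.uIcc_of_le zero_le_one] at ht
  have h0' := sum_cent_mul_Y X Y h (hYpos t ht)
  have hdiff : ∀ i, cent X Y h i t * (lam0 t + h0 (X i)) * Y i t =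
      cent X Y h i t * cent X Y h0 i t * Y i t +
        (lam0 t + hbar X Y h0 t) * (cent X Y h i t * Y i t) := by
    intro i
    have : cent X Y h0 i t = h0 (X i) - hbar X Y h0 t := rfl
    rw [this]
    ring
  simp only [hdiff, Finset.sum_add_distrib, ← Finset.mul_sum, h0', mul_zero, add_zero]

lemma noiseZ_eq (hYm : ∀ i, Measurable (Y i)) (hY : ∀ i t, Y i t ∈ Set.Icc (0:ℝ) 1)
    (hYpos : ∀ t ∈ Set.Icc (0:ℝ) 1, 0 < ∑ i, Y i t)
    (N : Fin n → Measure ℝ) (hdic : Fin M → (Fin d → ℝ) → ℝ)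
    {lam0 : ℝ → ℝ} (hlam : IntervalIntegrable lam0 volume 0 1) (h0 : (Fin d → ℝ) → ℝ)
    (j : Fin M) :
    noiseZ X Y N hdic lam0 h0 j = empLin X Y N (hdic j) - empInner X Y (hdic j) h0 := by
  rw [empInner_eq, ← compensator_eq X hYm hY hYpos hlam, empLin, ← mul_sub,
    ← Finset.sum_sub_distrib]
  rfl

end Centring

section Penalty

variable {M : ℕ} {w : Fin M → ℝ}

lemma penW_segment_le (hw : ∀ j, 0 < w j) (a b : Fin M → ℝ) {s : ℝ} (hs0 : 0 ≤ s) (hs1 : s ≤ 1) :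
    penW w (fun j => a j - s * (a j - b j)) ≤ (1 - s) * penW w a + s * penW w b := by
  simp only [penW, Finset.mul_sum, ← Finset.sum_add_distrib]
  refine Finset.sum_le_sum fun j _ => ?_
  have h : |a j - s * (a j - b j)| ≤ (1 - s) * |a j| + s * |b j| := by
    have := abs_add_le ((1 - s) * a j) (s * b j)
    rw [abs_mul, abs_mul, abs_of_nonneg hs0, abs_of_nonneg (sub_nonneg.2 hs1)] at this
    have e : a j - s * (a j - b j) = (1 - s) * a j + s * b j := by ring
    rwa [e]
  calc w j * |a j - s * (a j - b j)| ≤ w j * ((1 - s) * |a j| + s * |b j|) :=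
        mul_le_mul_of_nonneg_left h (hw j).le
    _ = _ := by ring

lemma cone_of_pen_le (hw : ∀ j, 0 < w j) (a b : Fin M → ℝ)
    (h : penW w a - penW w b ≤ penW w (fun j => a j - b j) / 2) :
    penW w (restr (suppJ b)ᶜ a) ≤ 3 * penW w (restr (suppJ b) (fun j => a j - b j)) := by
  -- Coordinatewise: off the support `b j = 0`, on it `|b j| - |a j| ≤ |a j - b j|`.
  have key : ∀ j, w j * |restr (suppJ b)ᶜ a j| -
      3 * (w j * |restr (suppJ b) (fun j => a j - b j) j|) ≤
      2 * (w j * |a j| - w j * |b j|) - w j * |a j - b j| := by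
    intro j
    by_cases hj : b j = 0
    · simp [restr, suppJ, hj]
      linarith
    · simp only [restr, suppJ, Finset.mem_compl, Finset.mem_filter, Finset.mem_univ, true_and,
        ne_eq, hj, not_false_eq_true, not_true_eq_false, if_true, if_false, abs_zero, mul_zero]
      have h1 : |b j| - |a j| ≤ |a j - b j| := by
        rw [abs_sub_comm]
        exact abs_sub_abs_le_abs_sub _ _
      nlinarith [mul_le_mul_of_nonneg_left h1 (hw j).le]
  have hsum := Finset.sum_le_sum fun j (_ : j ∈ Finset.univ) => key j
  simp only [Finset.sum_sub_distrib, ← Finset.mul_sum] at hsum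
  simp only [penW] at h ⊢
  linarith

end Penalty

lemma nonpos_of_forall_le_mul {P Q : ℝ} (h : ∀ s : ℝ, 0 < s → s ≤ 1 → P ≤ s * Q) : P ≤ 0 := by
  refine ge_of_tendsto (x := nhdsWithin (0:ℝ) (Set.Ioi 0)) (f := fun s : ℝ => s * Q) ?_ ?_
  · have : Filter.Tendsto (fun s : ℝ => s * Q) (nhds 0) (nhds (0 * Q)) :=
      (continuous_id.mul continuous_const).tendsto 0
    rw [zero_mul] at this
    exact this.mono_left nhdsWithin_le_nhds
  · filter_upwards [Ioc_mem_nhdsGT (zero_lt_one' ℝ)] with s hs using h s hs.1 hs.2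

/-- **Cone constraint (key step in the proof of Theorem 2).**
On the event where `2 |(Zₙ)ⱼ| ≤ ŵⱼ` for all `j`, if `β̂` minimizes `Rₙ(b) + 2 pen(b)`
over a convex set `B`, `β ∈ B`, `J = J(β)` and `⟨h_{β̂} − h₀, h_{β̂} − h_β⟩ₙ ≥ 0`, then
`|β̂_{J^∁}|₁,ŵ ≤ 3 |β̂_J − β_J|₁,ŵ`. -/
theorem cone_constraint
    {n M d : ℕ} (hn : 1 ≤ n) (hM : 1 ≤ M) (hd1 : 1 ≤ d)
    (X : Fin n → (Fin d → ℝ)) (Y : Fin n → ℝ → ℝ)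
    (hYmeas : ∀ i, Measurable (Y i))
    (hYrange : ∀ i t, Y i t ∈ Set.Icc (0:ℝ) 1)
    (hYpos : ∀ t ∈ Set.Icc (0:ℝ) 1, 0 < ∑ i, Y i t)
    (N : Fin n → Measure ℝ) (hN : ∀ i, IsFiniteMeasure (N i))
    (hdic : Fin M → (Fin d → ℝ) → ℝ)
    (lam0 : ℝ → ℝ) (hlam_int : IntervalIntegrable lam0 volume 0 1)
    (hlam_nonneg : ∀ t, 0 ≤ lam0 t)
    (h0 : (Fin d → ℝ) → ℝ) (hh0 : ∀ x, 0 ≤ h0 x)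
    (w : Fin M → ℝ) (hw : ∀ j, 0 < w j)
    (hnoise : ∀ j, 2 * |noiseZ X Y N hdic lam0 h0 j| ≤ w j)
    (B : Set (Fin M → ℝ)) (hBconv : Convex ℝ B)
    (βhat : Fin M → ℝ) (hβhatB : βhat ∈ B)
    (hmin : ∀ b ∈ B,
      riskRn X Y N hdic βhat + 2 * penW w βhat ≤ riskRn X Y N hdic b + 2 * penW w b)
    (β : Fin M → ℝ) (hβB : β ∈ B)
    (hpos : 0 ≤ empInner X Y (fun x => hlin hdic βhat x - h0 x)
      (fun x => hlin hdic βhat x - hlin hdic β x)) :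
    penW w (restr (suppJ β)ᶜ βhat) ≤
      3 * penW w (restr (suppJ β) (fun j => βhat j - β j)) := by
  have hlin_sub : ∀ (a b : Fin M → ℝ) (s : ℝ), hlin hdic (fun j => a j - s * b j) =
      fun x => 1 * hlin hdic a x + (-s) * hlin hdic b x := by
    intro a b s
    funext x
    simp only [hlin, Finset.mul_sum, ← Finset.sum_add_distrib]
    exact Finset.sum_congr rfl fun j _ => by ring
  set Δ : Fin M → ℝ := fun j => βhat j - β j with hΔ
  -- Exact second-order expansion of the risk along the segment from `β̂` to `β`.
  have hrisk : ∀ s : ℝ, riskRn X Y N hdic (fun j => βhat j - s * Δ j) =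
      riskRn X Y N hdic βhat
        - 2 * s * (empInner X Y (hlin hdic βhat) (hlin hdic Δ) - empLin X Y N (hlin hdic Δ))
        + s ^ 2 * empInner X Y (hlin hdic Δ) (hlin hdic Δ) := by
    intro s
    have hL : empLin X Y N (hlin hdic (fun j => βhat j - s * Δ j)) =
        empLin X Y N (hlin hdic βhat) - s * empLin X Y N (hlin hdic Δ) := by
      simp only [empLin_hlin X hYmeas hYrange N hN, Finset.mul_sum, ← Finset.sum_sub_distrib]
      exact Finset.sum_congr rfl fun j _ => by ring
    rw [riskRn_eq X hn hYmeas hYrange, riskRn_eq X hn hYmeas hYrange, hL, hlin_sub, empInner_comb X hYmeas hYrange,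
      empInner_comm X (hlin hdic βhat), empInner_comm X (hlin hdic Δ),
      empInner_comb X hYmeas hYrange, empInner_comb X hYmeas hYrange,
      empInner_comm X (hlin hdic Δ) (hlin hdic βhat)]
    ring
  have hvar : 2 * (empInner X Y (hlin hdic βhat) (hlin hdic Δ) - empLin X Y N (hlin hdic Δ))
      + 2 * (penW w βhat - penW w β) ≤ 0 := by
    refine nonpos_of_forall_le_mul (Q := empInner X Y (hlin hdic Δ) (hlin hdic Δ)) ?_
    intro s hs0 hs1
    have hmem : (fun j => βhat j - s * Δ j) ∈ B := by
      have := hBconv hβhatB hβB (sub_nonneg.2 hs1) hs0.le (by ring)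
      convert this using 1
      funext j
      simp only [hΔ, Pi.add_apply, Pi.smul_apply, smul_eq_mul]
      ring
    have h1 := hmin _ hmem
    have h2 := penW_segment_le hw βhat β hs0.le hs1
    rw [hrisk s] at h1
    refine le_of_mul_le_mul_left ?_ hs0
    linarith
  have hZ : empLin X Y N (hlin hdic Δ) - empInner X Y (hlin hdic Δ) h0 =
      ∑ j, Δ j * noiseZ X Y N hdic lam0 h0 j := by
    simp only [empLin_hlin X hYmeas hYrange N hN, empInner_hlin X hYmeas hYrange,
      ← Finset.sum_sub_distrib, noiseZ_eq X hYmeas hYrange hYpos N hdic hlam_int, mul_sub]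
  have hZle : ∑ j, Δ j * noiseZ X Y N hdic lam0 h0 j ≤ penW w Δ / 2 := by
    rw [penW, Finset.sum_div]
    refine Finset.sum_le_sum fun j _ => (le_abs_self _).trans ?_
    rw [abs_mul]
    nlinarith [mul_le_mul_of_nonneg_left (hnoise j) (abs_nonneg (Δ j))]
  have hpos' : 0 ≤ empInner X Y (hlin hdic βhat) (hlin hdic Δ) -
      empInner X Y (hlin hdic Δ) h0 := by
    have e1 : (fun x => hlin hdic βhat x - h0 x) =
        fun x => 1 * hlin hdic βhat x + (-1) * h0 x := by funext x; ring
    have e2 : (fun x => hlin hdic βhat x - hlin hdic β x) = hlin hdic Δ := by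
      funext x
      simp only [hlin, hΔ, sub_mul, Finset.sum_sub_distrib]
    rw [e1, e2, empInner_comb X hYmeas hYrange, empInner_comm X h0] at hpos
    linarith
  exact cone_of_pen_le hw βhat β (by linarith)
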